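/- arXiv:1111.4298 — 2 statements merged into one kernel-verified Lean document; each statement's English description precedes it below -/
import Mathlib

section
/- Let N ≥ 2, let 0 = x_0 < x_1 < ⋯ < x_N be grid points, let 0 ≤ σ̲ < σ̄, r ≥ 0 and Δt > 0. For every vector σ = (σ_1,…,σ_{N−1}) with σ_i ∈ [σ̲, σ̄] for all interior indices i, the (N+1)×(N+1) matrix I − Δt·A(σ) is invertible and every entry of its inverse is nonnegative (i.e. I − Δt·A(σ) is an M-matrix). -/
/-!
`B = I − Δt·A(σ)` has nonpositive off-diagonal entries and positive row sums: the rows of `A(σ)` sum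
to `-r` (interior) or `0` (boundary), so those of `B` sum to `1 + Δt·r` or `1`. Hence `B v ≥ 0`
forces `v ≥ 0`, as one sees in the row where `v` is minimal. Applied to `±v` this discrete minimum
principle makes `B` injective; applied to the columns of `B⁻¹`, whose images under `B` are the
standard basis vectors, it makes `B⁻¹` entrywise nonnegative.
-/

/-- `α_i(σ) = σ²x_i²/((x_i − x_{i−1})(x_{i+1} − x_{i−1}))`. -/
noncomputable def alphaC (x : ℕ → ℝ) (s : ℝ) (i : ℕ) : ℝ :=
  s ^ 2 * (x i) ^ 2 / ((x i - x (i - 1)) * (x (i + 1) - x (i - 1)))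

/-- `β_i(σ) = σ²x_i²/((x_{i+1} − x_i)(x_{i+1} − x_{i−1}))`. -/
noncomputable def betaC (x : ℕ → ℝ) (s : ℝ) (i : ℕ) : ℝ :=
  s ^ 2 * (x i) ^ 2 / ((x (i + 1) - x i) * (x (i + 1) - x (i - 1)))

/-- The `(N+1)×(N+1)` matrix `A(σ)` of the implicit characteristic finite difference
scheme: zero rows at the boundary indices `0` and `N`, and for each interior row `i`
the only nonzero entries are `A_{i,i-1} = α_i(σ_i)`, `A_{i,i+1} = β_i(σ_i)` and
`A_{i,i} = −(α_i(σ_i)+β_i(σ_i)+r)`. -/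
noncomputable def Amat (N : ℕ) (x : ℕ → ℝ) (r : ℝ) (σ : ℕ → ℝ) :
    Matrix (Fin (N + 1)) (Fin (N + 1)) ℝ :=
  Matrix.of fun i j =>
    if 1 ≤ (i : ℕ) ∧ (i : ℕ) ≤ N - 1 then
      if (j : ℕ) + 1 = (i : ℕ) then alphaC x (σ (i : ℕ)) (i : ℕ)
      else if (j : ℕ) = (i : ℕ) + 1 then betaC x (σ (i : ℕ)) (i : ℕ)
      else if (j : ℕ) = (i : ℕ) then -(alphaC x (σ (i : ℕ)) (i : ℕ) + betaC x (σ (i : ℕ)) (i : ℕ) + r)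
      else 0
    else 0

open Matrix

section MonotoneMatrix

variable {n R K : Type*} [Fintype n]

/-- Monotone matrices in the sense of Collatz. Over an ordered field these are the invertible
matrices with entrywise nonnegative inverse. -/
def IsMonotoneMatrix [NonUnitalNonAssocSemiring R] [LE R] (B : Matrix n n R) : Prop :=
  ∀ ⦃v : n → R⦄, 0 ≤ B *ᵥ v → 0 ≤ v

theorem isMonotoneMatrix_of_rowSum_pos [Ring R] [LinearOrder R] [IsStrictOrderedRing R]
    {B : Matrix n n R} (hoff : ∀ i j, i ≠ j → B i j ≤ 0) (hsum : ∀ i, 0 < ∑ j, B i j) :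
    IsMonotoneMatrix B := by
  intro v hv i
  have : Nonempty n := ⟨i⟩
  obtain ⟨k, hk⟩ := Finite.exists_min v
  have hterm : ∀ j, B k j * v j ≤ B k j * v k := by
    intro j
    obtain rfl | hkj := eq_or_ne k j
    · exact le_rfl
    · exact mul_le_mul_of_nonpos_left (hk j) (hoff k j hkj)
  have hmul : 0 ≤ (∑ j, B k j) * v k :=
    calc
      0 ≤ (B *ᵥ v) k := hv k
      _ ≤ ∑ j, B k j * v k := Finset.sum_le_sum fun j _ => hterm j
      _ = (∑ j, B k j) * v k := (Finset.sum_mul ..).symm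
  exact (nonneg_of_mul_nonneg_right hmul (hsum k)).trans (hk i)

variable [DecidableEq n]

theorem isMonotoneMatrix_one_sub_smul [Ring R] [LinearOrder R] [IsStrictOrderedRing R]
    {A : Matrix n n R} {t : R} (ht : 0 ≤ t) (hoff : ∀ i j, i ≠ j → 0 ≤ A i j)
    (hsum : ∀ i, t * ∑ j, A i j < 1) : IsMonotoneMatrix (1 - t • A) := by
  refine isMonotoneMatrix_of_rowSum_pos (fun i j hij => ?_) fun i => ?_
  · simpa [one_apply_ne hij] using mul_nonneg ht (hoff i j hij)
  · have hrow : ∑ j, (1 - t • A) i j = 1 - t * ∑ j, A i j := by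
      simp [Finset.sum_sub_distrib, Finset.mul_sum, one_apply]
    rw [hrow]
    exact sub_pos.2 (hsum i)

variable [Field K] [PartialOrder K] [IsOrderedRing K] {B : Matrix n n K}

theorem IsMonotoneMatrix.isUnit (hB : IsMonotoneMatrix B) : IsUnit B := by
  rw [← mulVec_injective_iff_isUnit]
  refine (injective_iff_map_eq_zero B.mulVecLin).2 fun v hv => ?_
  rw [mulVecLin_apply] at hv
  have hv_nonneg : 0 ≤ v := hB hv.ge
  have hv_neg : 0 ≤ -v := hB (by rw [mulVec_neg, hv, neg_zero])
  exact le_antisymm (neg_nonneg.1 hv_neg) hv_nonneg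

theorem IsMonotoneMatrix.inv_nonneg (hB : IsMonotoneMatrix B) (i j : n) : 0 ≤ B⁻¹ i j := by
  have hdet : IsUnit B.det := (isUnit_iff_isUnit_det B).1 hB.isUnit
  have hcol : B *ᵥ B⁻¹.col j = Pi.single j 1 := by
    rw [← mulVec_single_one, mulVec_mulVec, mul_nonsing_inv B hdet, one_mulVec]
  have hcol_nonneg : 0 ≤ B *ᵥ B⁻¹.col j := by
    rw [hcol]
    exact Pi.single_nonneg.2 zero_le_one
  exact hB hcol_nonneg i

end MonotoneMatrix

theorem alphaC_nonneg {x : ℕ → ℝ} {i : ℕ} (hleft : x (i - 1) ≤ x i) (hright : x i ≤ x (i + 1))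
    (s : ℝ) : 0 ≤ alphaC x s i :=
  div_nonneg (by positivity)
    (mul_nonneg (sub_nonneg.2 hleft) (sub_nonneg.2 (hleft.trans hright)))

theorem betaC_nonneg {x : ℕ → ℝ} {i : ℕ} (hleft : x (i - 1) ≤ x i) (hright : x i ≤ x (i + 1))
    (s : ℝ) : 0 ≤ betaC x s i :=
  div_nonneg (by positivity)
    (mul_nonneg (sub_nonneg.2 hright) (sub_nonneg.2 (hleft.trans hright)))

section Amat

variable {N : ℕ} {i : Fin (N + 1)}

theorem Amat_row_boundary (hi : ¬(1 ≤ (i : ℕ) ∧ (i : ℕ) ≤ N - 1)) (x : ℕ → ℝ) (r : ℝ)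
    (σ : ℕ → ℝ) : Amat N x r σ i = 0 := by
  ext j
  exact if_neg hi

theorem Amat_row_interior (hi : 1 ≤ (i : ℕ) ∧ (i : ℕ) ≤ N - 1) (x : ℕ → ℝ) (r : ℝ)
    (σ : ℕ → ℝ) :
    Amat N x r σ i =
      Pi.single ⟨i - 1, by omega⟩ (alphaC x (σ i) i)
        + Pi.single ⟨i + 1, by omega⟩ (betaC x (σ i) i)
        + Pi.single i (-(alphaC x (σ i) i + betaC x (σ i) i + r)) := by
  ext j
  have hleft : (j : ℕ) = i - 1 ↔ (j : ℕ) + 1 = i := by omega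
  simp only [Amat, of_apply, if_pos hi, Pi.add_apply, Pi.single_apply, Fin.ext_iff, hleft]
  split_ifs <;> first | omega | simp

theorem sum_Amat_row_interior (hi : 1 ≤ (i : ℕ) ∧ (i : ℕ) ≤ N - 1) (x : ℕ → ℝ) (r : ℝ)
    (σ : ℕ → ℝ) : ∑ j, Amat N x r σ i j = -r := by
  simp only [Amat_row_interior hi, Pi.add_apply, Finset.sum_add_distrib,
    Finset.sum_pi_single', Finset.mem_univ, if_true]
  ring

theorem Amat_nonneg_of_ne {x : ℕ → ℝ} (hx : ∀ k < N, x k ≤ x (k + 1)) (r : ℝ) (σ : ℕ → ℝ)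
    {j : Fin (N + 1)} (hij : i ≠ j) : 0 ≤ Amat N x r σ i j := by
  by_cases hi : 1 ≤ (i : ℕ) ∧ (i : ℕ) ≤ N - 1
  · have hleft : x (i - 1) ≤ x i := by
      simpa only [Nat.sub_add_cancel hi.1] using hx (i - 1) (by omega)
    have hright : x i ≤ x (i + 1) := hx i (by omega)
    rw [Amat_row_interior hi, Pi.add_apply, Pi.single_eq_of_ne' hij, add_zero]
    have hsingle : ∀ (k : Fin (N + 1)) {a : ℝ}, 0 ≤ a → 0 ≤ (Pi.single k a : _ → ℝ) :=
      fun _ _ ha => Pi.single_nonneg.2 ha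
    exact add_nonneg (hsingle _ (alphaC_nonneg hleft hright _) j)
      (hsingle _ (betaC_nonneg hleft hright _) j)
  · rw [Amat_row_boundary hi, Pi.zero_apply]

end Amat

theorem Mmatrix_one_sub_dt_A_general (N : ℕ) (x : ℕ → ℝ) (hxmono : ∀ i < N, x i < x (i + 1))
    (r Δt : ℝ) (hΔt : 0 ≤ Δt) (hr : 0 < 1 + Δt * r) (σ : ℕ → ℝ) :
    IsUnit (1 - Δt • Amat N x r σ) ∧
      ∀ i j, 0 ≤ (1 - Δt • Amat N x r σ)⁻¹ i j := by
  have hoff : ∀ i j, i ≠ j → 0 ≤ Amat N x r σ i j := fun i j hij =>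
    Amat_nonneg_of_ne (fun k hk => (hxmono k hk).le) r σ hij
  have hsum : ∀ i, Δt * ∑ j, Amat N x r σ i j < 1 := by
    intro i
    by_cases hi : 1 ≤ (i : ℕ) ∧ (i : ℕ) ≤ N - 1
    · rw [sum_Amat_row_interior hi]
      linarith
    · simp [Amat_row_boundary hi]
  have hmono := isMonotoneMatrix_one_sub_smul hΔt hoff hsum
  exact ⟨hmono.isUnit, hmono.inv_nonneg⟩

/-- `I − Δt·A(σ)` is an M-matrix: it is invertible and all entries of its inverse
are nonnegative. -/
theorem Mmatrix_one_sub_dt_A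
    (N : ℕ) (hN : 2 ≤ N) (x : ℕ → ℝ) (hx0 : x 0 = 0)
    (hxmono : ∀ i < N, x i < x (i + 1))
    (σlo σhi r Δt : ℝ) (hσlo : 0 ≤ σlo) (hσ : σlo < σhi) (hr : 0 ≤ r) (hΔt : 0 < Δt)
    (σ : ℕ → ℝ) (hσrange : ∀ i, 1 ≤ i → i ≤ N - 1 → σ i ∈ Set.Icc σlo σhi) :
    IsUnit (1 - Δt • Amat N x r σ) ∧
      ∀ i j, 0 ≤ (1 - Δt • Amat N x r σ)⁻¹ i j := by
  exact Mmatrix_one_sub_dt_A_general N x hxmono r Δt hΔt.le (by positivity) σ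
end

section
/- (Spatial consistency of the central difference discretization on a nonuniform grid.) Let v : ℝ → ℝ be three times continuously differentiable on [x_0, x_N] and let M₃ = sup_{x ∈ [x_0,x_N]} |v'''(x)|. Then for every σ > 0 and every interior index i, | α_i(σ) v(x_{i−1}) + β_i(σ) v(x_{i+1}) − (α_i(σ)+β_i(σ)) v(x_i) − ½ σ² x_i² v''(x_i) | ≤ (σ² x_i² M₃ / 6) · ((x_i − x_{i−1}) + (x_{i+1} − x_i)). In particular the discretization error of the spatial operator ½σ²x²∂_{xx}v − rv by L_h^σ is O(Δx) on a quasi-uniform grid. -/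
section Taylor

open Set
open scoped Nat

theorem iteratedDerivWithin_subset {𝕜 F : Type*} [NontriviallyNormedField 𝕜]
    [NormedAddCommGroup F] [NormedSpace 𝕜 F] {f : 𝕜 → F} {s t : Set 𝕜} {n : ℕ} {x : 𝕜}
    (hst : s ⊆ t) (hs : UniqueDiffOn 𝕜 s) (ht : UniqueDiffOn 𝕜 t) (hf : ContDiffOn 𝕜 n f t)
    (hx : x ∈ s) : iteratedDerivWithin n f s x = iteratedDerivWithin n f t x := by
  simp only [iteratedDerivWithin, iteratedFDerivWithin_subset hst hs ht hf hx]

theorem iteratedDerivWithin_congr_set {𝕜 F : Type*} [NontriviallyNormedField 𝕜]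
    [NormedAddCommGroup F] [NormedSpace 𝕜 F] {f : 𝕜 → F} {s t : Set 𝕜} {x : 𝕜}
    (hst : s =ᶠ[nhds x] t) (n : ℕ) : iteratedDerivWithin n f s x = iteratedDerivWithin n f t x := by
  simp only [iteratedDerivWithin, iteratedFDerivWithin_congr_set hst]

theorem taylorWithinEval_subset {E : Type*} [NormedAddCommGroup E] [NormedSpace ℝ E] {f : ℝ → E}
    {s t : Set ℝ} {n : ℕ} {c : ℝ} (hst : s ⊆ t) (hs : UniqueDiffOn ℝ s) (ht : UniqueDiffOn ℝ t)
    (hf : ContDiffOn ℝ n f t) (hc : c ∈ s) (y : ℝ) :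
    taylorWithinEval f n s c y = taylorWithinEval f n t c y := by
  simp only [taylor_within_apply]
  refine Finset.sum_congr rfl fun k hk => ?_
  have hkn : k ≤ n := Finset.mem_range_succ_iff.mp hk
  rw [iteratedDerivWithin_subset hst hs ht (hf.of_le (mod_cast hkn)) hc]

theorem taylorWithinEval_two {E : Type*} [NormedAddCommGroup E] [NormedSpace ℝ E] (f : ℝ → E)
    (s : Set ℝ) (c y : ℝ) :
    taylorWithinEval f 2 s c y = f c + (y - c) • iteratedDerivWithin 1 f s c
      + ((y - c) ^ 2 / 2) • iteratedDerivWithin 2 f s c := by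
  norm_num [taylorWithinEval_succ, div_eq_inv_mul]

variable {f : ℝ → ℝ} {s : Set ℝ} {n : ℕ} {c y M : ℝ}

theorem taylor_mean_remainder_lagrange_within (hcy : c ≠ y) (hs : UniqueDiffOn ℝ s)
    (hsub : uIcc c y ⊆ s) (hf : ContDiffOn ℝ n f s)
    (hf' : DifferentiableOn ℝ (iteratedDerivWithin n f s) (uIoo c y)) :
    ∃ ξ ∈ uIoo c y, f y - taylorWithinEval f n s c y =
      iteratedDerivWithin (n + 1) f s ξ * (y - c) ^ (n + 1) / (n + 1)! := by
  have hu : UniqueDiffOn ℝ (uIcc c y) := uniqueDiffOn_uIcc hcy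
  have hd : DifferentiableOn ℝ (iteratedDerivWithin n f (uIcc c y)) (uIoo c y) :=
    hf'.congr fun t ht => iteratedDerivWithin_subset hsub hu hs hf (uIoo_subset_uIcc_self ht)
  obtain ⟨ξ, hξ, h⟩ := taylor_mean_remainder_lagrange hcy (hf.mono hsub) hd
  have hnhds : uIcc c y ∈ nhds ξ :=
    Filter.mem_of_superset (isOpen_Ioo.mem_nhds hξ) uIoo_subset_uIcc_self
  have hset : uIcc c y =ᶠ[nhds ξ] s :=
    (Filter.eventuallyEq_univ.mpr hnhds).trans
      (Filter.eventuallyEq_univ.mpr (Filter.mem_of_superset hnhds hsub)).symm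
  refine ⟨ξ, hξ, ?_⟩
  rw [← taylorWithinEval_subset hsub hu hs hf left_mem_uIcc, h, iteratedDerivWithin_congr_set hset]

theorem abs_sub_taylorWithinEval_le (hs : UniqueDiffOn ℝ s) (hsub : uIcc c y ⊆ s)
    (hf : ContDiffOn ℝ n f s)
    (hf' : DifferentiableOn ℝ (iteratedDerivWithin n f s) (uIoo c y))
    (hM : ∀ t ∈ uIoo c y, |iteratedDerivWithin (n + 1) f s t| ≤ M) :
    |f y - taylorWithinEval f n s c y| ≤ M * |y - c| ^ (n + 1) / (n + 1)! := by
  rcases eq_or_ne c y with rfl | hcy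
  · simp
  obtain ⟨ξ, hξ, h⟩ := taylor_mean_remainder_lagrange_within hcy hs hsub hf hf'
  rw [h, abs_div, abs_mul, abs_pow, Nat.abs_cast]
  gcongr
  exact hM ξ hξ

theorem abs_three_point_stencil_sub_le {l r a b : ℝ} (hs : UniqueDiffOn ℝ s)
    (hconn : s.OrdConnected) (hf : ContDiffOn ℝ 2 f s)
    (hf' : DifferentiableOn ℝ (iteratedDerivWithin 2 f s) (interior s))
    (hM : ∀ t ∈ interior s, |iteratedDerivWithin 3 f s t| ≤ M)
    (hl : l ∈ s) (hc : c ∈ s) (hr : r ∈ s) (hmoment : a * (c - l) = b * (r - c)) :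
    |a * f l + b * f r - (a + b) * f c
        - (a * (c - l) ^ 2 + b * (r - c) ^ 2) / 2 * iteratedDerivWithin 2 f s c|
      ≤ M / 6 * (|a| * |c - l| ^ 3 + |b| * |r - c| ^ 3) := by
  have hremainder : ∀ y ∈ s, |f y - taylorWithinEval f 2 s c y| ≤ M / 6 * |y - c| ^ 3 := by
    intro y hy
    have hsub : uIcc c y ⊆ s := hconn.uIcc_subset hc hy
    have hint : uIoo c y ⊆ interior s :=
      interior_maximal (uIoo_subset_uIcc_self.trans hsub) isOpen_Ioo
    refine (abs_sub_taylorWithinEval_le hs hsub hf (hf'.mono hint)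
      fun t ht => hM t (hint ht)).trans_eq ?_
    norm_num [Nat.factorial]
    ring
  have herror : a * f l + b * f r - (a + b) * f c
        - (a * (c - l) ^ 2 + b * (r - c) ^ 2) / 2 * iteratedDerivWithin 2 f s c
      = a * (f l - taylorWithinEval f 2 s c l) + b * (f r - taylorWithinEval f 2 s c r) := by
    simp only [taylorWithinEval_two, smul_eq_mul]
    linear_combination (-iteratedDerivWithin 1 f s c) * hmoment
  calc _ ≤ |a| * |f l - taylorWithinEval f 2 s c l| + |b| * |f r - taylorWithinEval f 2 s c r| := by
        rw [herror, ← abs_mul, ← abs_mul]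
        exact abs_add_le _ _
    _ ≤ |a| * (M / 6 * |l - c| ^ 3) + |b| * (M / 6 * |r - c| ^ 3) := by
        gcongr
        exacts [hremainder l hl, hremainder r hr]
    _ = _ := by
        rw [abs_sub_comm l c]
        ring

end Taylor

section Weights

variable {x : ℕ → ℝ} {i : ℕ}

theorem alphaC_nonneg_s4 (σ : ℝ) (hl : x (i - 1) ≤ x i) (hr : x i ≤ x (i + 1)) :
    0 ≤ alphaC x σ i :=
  div_nonneg (by positivity) (mul_nonneg (by linarith) (by linarith))

theorem betaC_nonneg_s4 (σ : ℝ) (hl : x (i - 1) ≤ x i) (hr : x i ≤ x (i + 1)) :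
    0 ≤ betaC x σ i :=
  div_nonneg (by positivity) (mul_nonneg (by linarith) (by linarith))

theorem alphaC_mul_sub_eq_betaC_mul_sub (σ : ℝ) (hl : x (i - 1) ≠ x i) (hr : x i ≠ x (i + 1)) :
    alphaC x σ i * (x i - x (i - 1)) = betaC x σ i * (x (i + 1) - x i) := by
  have hl' : x i - x (i - 1) ≠ 0 := sub_ne_zero.mpr hl.symm
  have hr' : x (i + 1) - x i ≠ 0 := sub_ne_zero.mpr hr.symm
  rw [alphaC, betaC, div_mul_eq_mul_div, div_mul_eq_mul_div, mul_comm (x i - _),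
    mul_comm (x (i + 1) - x i), mul_div_mul_right _ _ hl', mul_div_mul_right _ _ hr']

theorem alphaC_mul_sq_add_betaC_mul_sq (σ : ℝ) (hl : x (i - 1) ≠ x i) (hr : x i ≠ x (i + 1))
    (hlr : x (i - 1) ≠ x (i + 1)) :
    alphaC x σ i * (x i - x (i - 1)) ^ 2 + betaC x σ i * (x (i + 1) - x i) ^ 2
      = σ ^ 2 * x i ^ 2 := by
  rw [alphaC, betaC]
  field_simp [sub_ne_zero.mpr hl.symm, sub_ne_zero.mpr hr.symm, sub_ne_zero.mpr hlr.symm]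
  ring

theorem alphaC_mul_cube_add_betaC_mul_cube_le (σ : ℝ) (hl : x (i - 1) < x i)
    (hr : x i < x (i + 1)) :
    alphaC x σ i * (x i - x (i - 1)) ^ 3 + betaC x σ i * (x (i + 1) - x i) ^ 3
      ≤ σ ^ 2 * x i ^ 2 * ((x i - x (i - 1)) + (x (i + 1) - x i)) := by
  have hα := alphaC_nonneg_s4 σ hl.le hr.le
  have hβ := betaC_nonneg_s4 σ hl.le hr.le
  have hh : 0 ≤ x i - x (i - 1) := sub_nonneg.mpr hl.le
  have hk : 0 ≤ x (i + 1) - x i := sub_nonneg.mpr hr.le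
  rw [← alphaC_mul_sq_add_betaC_mul_sq σ hl.ne hr.ne (hl.trans hr).ne, add_mul, pow_succ _ 2,
    pow_succ _ 2, ← mul_assoc, ← mul_assoc]
  gcongr
  · exact le_add_of_nonneg_right hk
  · exact le_add_of_nonneg_left hh

end Weights

theorem spatial_consistency_central_difference_general
    (N : ℕ) (x : ℕ → ℝ) (hx : ∀ i < N, x i < x (i + 1)) (v : ℝ → ℝ) (M₃ : ℝ)
    (hv : ContDiffOn ℝ 2 v (Set.Icc (x 0) (x N)))
    (hv' : DifferentiableOn ℝ (iteratedDerivWithin 2 v (Set.Icc (x 0) (x N)))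
      (Set.Ioo (x 0) (x N)))
    (hM : ∀ y ∈ Set.Ioo (x 0) (x N),
      |iteratedDerivWithin 3 v (Set.Icc (x 0) (x N)) y| ≤ M₃)
    (σ : ℝ) (i : ℕ) (hi : 1 ≤ i) (hiN : i < N) :
    |alphaC x σ i * v (x (i - 1)) + betaC x σ i * v (x (i + 1))
        - (alphaC x σ i + betaC x σ i) * v (x i)
        - σ ^ 2 * (x i) ^ 2 / 2 * iteratedDerivWithin 2 v (Set.Icc (x 0) (x N)) (x i)|
      ≤ σ ^ 2 * (x i) ^ 2 * M₃ / 6 * ((x i - x (i - 1)) + (x (i + 1) - x i)) := by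
  have hmono : StrictMonoOn x (Set.Iic N) := strictMonoOn_Iic_of_lt_succ hx
  have hlt : ∀ {m n}, m < n → n ≤ N → x m < x n := fun hmn hn => hmono (hmn.le.trans hn) hn hmn
  have hmem : ∀ n ≤ N, x n ∈ Set.Icc (x 0) (x N) := fun n hn =>
    ⟨hmono.monotoneOn N.zero_le hn n.zero_le, hmono.monotoneOn hn Set.self_mem_Iic hn⟩
  have hl : x (i - 1) < x i := hlt (by lia) hiN.le
  have hr : x i < x (i + 1) := hx i hiN
  have hM₀ : 0 ≤ M₃ := (abs_nonneg _).trans (hM (x i) ⟨hlt hi hiN.le, hlt hiN le_rfl⟩)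
  rw [← interior_Icc] at hv' hM
  have hstencil := abs_three_point_stencil_sub_le (uniqueDiffOn_Icc (hlt (by lia) le_rfl))
    Set.ordConnected_Icc hv hv' hM (hmem (i - 1) (by lia)) (hmem i hiN.le) (hmem (i + 1) hiN)
    (alphaC_mul_sub_eq_betaC_mul_sub σ hl.ne hr.ne)
  rw [alphaC_mul_sq_add_betaC_mul_sq σ hl.ne hr.ne (hl.trans hr).ne,
    abs_of_nonneg (alphaC_nonneg_s4 σ hl.le hr.le), abs_of_nonneg (betaC_nonneg_s4 σ hl.le hr.le),
    abs_of_pos (sub_pos.mpr hl), abs_of_pos (sub_pos.mpr hr)] at hstencil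
  calc _ ≤ M₃ / 6 * (alphaC x σ i * (x i - x (i - 1)) ^ 3
          + betaC x σ i * (x (i + 1) - x i) ^ 3) := hstencil
    _ ≤ M₃ / 6 * (σ ^ 2 * x i ^ 2 * ((x i - x (i - 1)) + (x (i + 1) - x i))) := by
        gcongr
        exact alphaC_mul_cube_add_betaC_mul_cube_le σ hl hr
    _ = _ := by ring

/-- Spatial consistency of the central difference discretization on a nonuniform grid:
if `v` is three times continuously differentiable on `[x_0, x_N]` with `|v'''| ≤ M₃` there,
then for every `σ > 0` and interior index `i`,
`|α_i(σ)v(x_{i−1}) + β_i(σ)v(x_{i+1}) − (α_i(σ)+β_i(σ))v(x_i) − ½σ²x_i²v''(x_i)|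
  ≤ (σ²x_i²M₃/6)·((x_i − x_{i−1}) + (x_{i+1} − x_i))`. -/
theorem spatial_consistency_central_difference
    (N : ℕ) (hN : 2 ≤ N) (x : ℕ → ℝ) (hx0 : x 0 = 0)
    (hxmono : ∀ i < N, x i < x (i + 1))
    (v : ℝ → ℝ) (M₃ : ℝ)
    (hv : ContDiffOn ℝ 3 v (Set.Icc (x 0) (x N)))
    (hM : ∀ y ∈ Set.Icc (x 0) (x N),
      |iteratedDerivWithin 3 v (Set.Icc (x 0) (x N)) y| ≤ M₃) :
    ∀ σ : ℝ, 0 < σ → ∀ i, 1 ≤ i → i ≤ N - 1 →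
      |alphaC x σ i * v (x (i - 1)) + betaC x σ i * v (x (i + 1))
          - (alphaC x σ i + betaC x σ i) * v (x i)
          - σ ^ 2 * (x i) ^ 2 / 2 * iteratedDerivWithin 2 v (Set.Icc (x 0) (x N)) (x i)|
        ≤ σ ^ 2 * (x i) ^ 2 * M₃ / 6 * ((x i - x (i - 1)) + (x (i + 1) - x i)) := by
  intro σ _ i hi hiN
  have hlt : x 0 < x N :=
    strictMonoOn_Iic_of_lt_succ hxmono N.zero_le Set.self_mem_Iic (by lia)
  exact spatial_consistency_central_difference_general N x hxmono v M₃ (hv.of_le (by norm_num))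
    ((hv.differentiableOn_iteratedDerivWithin (by norm_num) (uniqueDiffOn_Icc hlt)).mono
      Set.Ioo_subset_Icc_self) (fun y hy => hM y (Set.Ioo_subset_Icc_self hy)) σ i hi (by lia)
end
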